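/- arXiv:2206.02007 — 2 statements merged into one kernel-verified Lean document; each statement's English description precedes it below -/
import Mathlib

section
/- For n = 6 (63 chips), there exists a reachable terminal configuration of labeled chip-firing in which the label of the chip at node 4 is smaller than the label of the chip at its left child, node 8; in particular, the local binary-search-tree property (each node's chip being larger than its left child's chip and smaller than its right child's chip) can fail in a reachable terminal configuration. -/
/-!
The proof exhibits an explicit legal sequence of 201 firings, `witnessMoves`, and checks it by
kernel evaluation. It places chip 25 at node 4 and chip 26 at node 8.

Why such a sequence exists: only comparisons with one threshold matter. Call the labels `1, …, 25`
small and the labels above `25` large; then the goal is a terminal configuration with a small chip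
at node 4 and a large chip at node 8. A firing acts on the small/large pattern alone, and it can be
undone as soon as the chips taken back from the left child, the parent and the right child are
weakly increasing in this two-letter order. Undoing firings from the desired final pattern (all
other chips unconstrained, each constrained only when an undone firing forces it) until all 63 chips
are back at the root yields a pattern-level run, and picking actual labels of the prescribed sizes
lifts it to the labeled run below.

Legality is transferred from the Boolean checker `legalCheck`. Terminality follows because the
final node map is injective on the labels `1, …, 63`.
-/

/-- The level of node `i` in the infinite binary tree: `⌊log₂ i⌋ + 1`. -/
def level (i : ℕ) : ℕ := Nat.log 2 i + 1

/-- The parent of node `i`; the root (node 1) is its own parent via the self-loop. -/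
def parent (i : ℕ) : ℕ := if i = 1 then 1 else i / 2

/-- A labeled configuration records, for each chip label, the node currently holding it. -/
abbrev LConfig := ℕ → ℕ

/-- A firing move: the node fired together with the three chosen chip labels
`a < b < c` (smallest, middle, largest). -/
abbrev Move := ℕ × ℕ × ℕ × ℕ

/-- Firing chips `a < b < c` at node `i`: the smallest chip `a` goes to the left child `2i`,
the largest chip `c` goes to the right child `2i + 1`, and the middle chip `b` goes to the
parent (back to the root via the self-loop when `i = 1`). -/
def LFire (i a b c : ℕ) (f : LConfig) : LConfig := fun x =>
  if x = a then 2 * i else if x = b then parent i else if x = c then 2 * i + 1 else f x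

/-- Applying a sequence of labeled firing moves. -/
def LFireSeq : List Move → LConfig → LConfig
  | [], f => f
  | (i, a, b, c) :: l, f => LFireSeq l (LFire i a b c f)

/-- A sequence of labeled firing moves is legal (for chips labeled `1, …, M`) if at each step
the fired node is a positive integer and the three chosen chips `a < b < c` are labels in
`{1, …, M}` all currently located at that node. -/
def LLegalSeq (M : ℕ) : List Move → LConfig → Prop
  | [], _ => True
  | (i, a, b, c) :: l, f => 1 ≤ i ∧ 1 ≤ a ∧ c ≤ M ∧ a < b ∧ b < c ∧
      f a = i ∧ f b = i ∧ f c = i ∧ LLegalSeq M l (LFire i a b c f)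

/-- The set of chips (among labels `1, …, M`) held by node `v`. -/
def chipsAt (M : ℕ) (f : LConfig) (v : ℕ) : Finset ℕ :=
  (Finset.Icc 1 M).filter (fun x => f x = v)

/-- A labeled configuration is terminal if every node holds at most 2 chips. -/
def LTerminal (M : ℕ) (f : LConfig) : Prop := ∀ v, 1 ≤ v → (chipsAt M f v).card ≤ 2

/-- A labeled configuration is reachable if some finite sequence of legal firings from the
initial configuration (all chips `1, …, M` at the root) produces it. -/
def LReachable (M : ℕ) (f : LConfig) : Prop :=
  ∃ l, LLegalSeq M l (fun _ => 1) ∧ f = LFireSeq l (fun _ => 1)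

/-- Node `j` lies in the subtree of node `i` iff `⌊j / 2^t⌋ = i` for some `t ≥ 0`. -/
def inSubtree (i j : ℕ) : Prop := ∃ t, j / 2 ^ t = i

/-- Boolean version of `LLegalSeq`, suited to evaluation in the kernel. -/
def legalCheck (M : ℕ) : List Move → LConfig → Bool
  | [], _ => true
  | (i, a, b, c) :: l, f =>
      Nat.ble 1 i && Nat.ble 1 a && Nat.ble c M && Nat.blt a b && Nat.blt b c &&
        Nat.beq (f a) i && Nat.beq (f b) i && Nat.beq (f c) i &&
        legalCheck M l (LFire i a b c f)

theorem legalSeq_of_legalCheck (M : ℕ) (l : List Move) (f : LConfig)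
    (h : legalCheck M l f = true) : LLegalSeq M l f := by
  induction l generalizing f with
  | nil => trivial
  | cons m l ih =>
    obtain ⟨i, a, b, c⟩ := m
    simp only [legalCheck, Bool.and_eq_true, Nat.ble_eq, Nat.blt_eq, Nat.beq_eq] at h
    obtain ⟨⟨⟨⟨⟨⟨⟨⟨hi, ha⟩, hc⟩, hab⟩, hbc⟩, hfa⟩, hfb⟩, hfc⟩, hl⟩ := h
    exact ⟨hi, ha, hc, hab, hbc, hfa, hfb, hfc, ih _ hl⟩

/-- A complete run on 63 chips. Each entry `(i, a, b, c)` fires the chips `a < b < c` at node `i`. -/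
def witnessMoves : List Move :=
  [(1, 1, 2, 3), (1, 26, 27, 28), (1, 4, 5, 6), (1, 7, 8, 9), (3, 3, 6, 9), (1, 10, 11, 12),
   (1, 13, 14, 15), (2, 1, 4, 10), (1, 16, 17, 18), (1, 19, 20, 21), (1, 22, 23, 24),
   (1, 2, 5, 25), (2, 7, 13, 19), (1, 6, 8, 11), (2, 6, 16, 22), (5, 10, 19, 22),
   (1, 4, 14, 17), (1, 5, 20, 23), (2, 2, 4, 5), (3, 12, 15, 18), (4, 1, 2, 6), (1, 8, 13, 16),
   (2, 2, 8, 19), (3, 21, 24, 25), (6, 3, 12, 21), (1, 29, 30, 31), (7, 9, 18, 25),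
   (1, 4, 14, 20), (1, 32, 33, 34), (1, 8, 13, 15), (1, 35, 36, 37), (1, 38, 39, 40),
   (1, 13, 14, 24), (3, 28, 31, 40), (1, 41, 42, 43), (3, 34, 37, 43), (3, 11, 17, 23),
   (3, 12, 16, 18), (1, 14, 16, 17), (2, 4, 8, 13), (5, 5, 13, 19), (6, 11, 12, 28),
   (4, 2, 4, 7), (3, 15, 20, 24), (1, 8, 16, 20), (2, 8, 13, 14), (3, 12, 17, 20),
   (1, 13, 16, 17), (1, 16, 44, 45), (6, 12, 15, 34), (12, 3, 11, 12), (2, 4, 13, 16),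
   (1, 13, 46, 47), (2, 13, 26, 29), (4, 4, 8, 13), (2, 8, 32, 35), (5, 14, 29, 35),
   (11, 19, 22, 35), (13, 21, 28, 34), (1, 48, 49, 50), (3, 45, 47, 50), (10, 5, 10, 14),
   (1, 51, 52, 53), (7, 40, 43, 50), (1, 54, 55, 56), (3, 43, 53, 56), (6, 28, 43, 45),
   (1, 57, 58, 59), (1, 60, 61, 62), (3, 17, 59, 62), (1, 27, 30, 63), (1, 33, 36, 39),
   (1, 31, 37, 42), (3, 39, 42, 43), (7, 43, 56, 62), (1, 26, 44, 46), (3, 46, 56, 63),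
   (1, 32, 47, 49), (14, 9, 40, 43), (1, 52, 53, 55), (3, 15, 49, 55), (1, 58, 59, 61),
   (7, 40, 55, 63), (1, 30, 36, 37), (15, 50, 62, 63), (3, 37, 55, 61), (6, 37, 39, 46),
   (1, 42, 44, 56), (1, 47, 49, 53), (3, 39, 53, 56), (7, 56, 61, 62), (2, 29, 38, 41),
   (6, 11, 17, 39), (2, 48, 51, 54), (5, 16, 41, 54), (2, 27, 57, 60), (4, 8, 29, 48),
   (2, 26, 31, 33), (5, 22, 33, 60), (2, 32, 52, 58), (4, 26, 27, 32), (9, 6, 32, 48),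
   (1, 36, 55, 59), (3, 17, 59, 61), (2, 30, 42, 47), (5, 10, 47, 58), (1, 44, 49, 53),
   (2, 29, 33, 41), (10, 10, 16, 22), (2, 27, 36, 47), (5, 16, 41, 47), (1, 38, 51, 57),
   (2, 38, 41, 44), (1, 31, 52, 55), (3, 53, 55, 57), (1, 42, 49, 59), (1, 33, 36, 51),
   (2, 31, 33, 42), (6, 15, 17, 53), (3, 17, 51, 59), (7, 57, 59, 61), (4, 29, 30, 32),
   (14, 40, 56, 57), (1, 41, 52, 55), (1, 33, 36, 49), (3, 49, 55, 59), (2, 30, 33, 41),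
   (5, 41, 42, 44), (1, 36, 51, 52), (1, 33, 51, 55), (2, 33, 36, 42), (7, 18, 23, 24),
   (3, 23, 52, 55), (7, 55, 56, 59), (15, 59, 61, 62), (6, 17, 23, 49), (1, 36, 51, 52),
   (3, 23, 52, 56), (7, 20, 56, 61), (15, 24, 25, 61), (8, 1, 26, 29), (8, 2, 4, 8),
   (14, 18, 20, 55), (12, 11, 15, 28), (13, 39, 45, 46), (6, 15, 23, 45), (4, 27, 31, 38),
   (4, 4, 30, 33), (2, 30, 31, 36), (1, 31, 51, 52), (3, 23, 52, 56), (7, 20, 25, 56),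
   (12, 15, 17, 37), (9, 7, 32, 38), (4, 26, 30, 32), (9, 13, 32, 33), (19, 33, 38, 48),
   (29, 43, 55, 57), (8, 4, 26, 27), (11, 54, 58, 60), (17, 8, 27, 29), (16, 1, 2, 4),
   (13, 45, 49, 53), (6, 17, 23, 49), (5, 36, 42, 58), (11, 44, 47, 58), (2, 30, 31, 42),
   (10, 16, 36, 41), (5, 36, 42, 47), (22, 19, 44, 54), (31, 61, 62, 63), (25, 12, 28, 37),
   (21, 14, 22, 41), (20, 5, 10, 16), (30, 24, 50, 59), (23, 35, 58, 60), (27, 34, 46, 53),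
   (26, 21, 39, 45), (18, 6, 7, 13), (28, 9, 18, 40), (24, 3, 11, 15), (15, 50, 56, 62),
   (10, 10, 22, 36), (14, 18, 20, 55), (11, 44, 47, 58), (13, 39, 46, 49), (12, 11, 17, 28),
   (4, 26, 30, 32), (9, 7, 32, 38), (8, 2, 26, 27), (1, 31, 51, 52), (3, 23, 25, 52),
   (7, 20, 52, 56), (2, 30, 31, 42), (6, 17, 23, 46), (4, 26, 30, 32), (1, 25, 31, 51),
   (5, 22, 42, 47), (2, 25, 30, 42), (3, 23, 51, 52), (1, 30, 31, 51)]

/-- The configuration in which the run `witnessMoves` ends. -/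
def witnessConfig : LConfig := LFireSeq witnessMoves (fun _ => 1)

theorem witnessMoves_legalCheck : legalCheck 63 witnessMoves (fun _ => 1) = true := by
  decide +kernel

/-- The final nodes of the chips `1, …, 63`, in this order. -/
theorem map_witnessConfig : (List.range' 1 63).map witnessConfig =
    [32, 16, 48, 33, 40, 36, 18, 34, 56, 20, 24, 50, 37, 42, 49, 41, 12, 28, 44, 14, 52, 10,
     6, 60, 4, 8, 17, 25, 35, 2, 1, 9, 38, 54, 46, 21, 51, 19, 26, 57, 43, 5, 58, 22, 53, 13,
     11, 39, 27, 30, 3, 7, 55, 45, 29, 15, 59, 23, 61, 47, 62, 31, 63] := by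
  decide +kernel

theorem witnessConfig_injOn {x y : ℕ} (hx : x ∈ Finset.Icc 1 63) (hy : y ∈ Finset.Icc 1 63)
    (h : witnessConfig x = witnessConfig y) : x = y := by
  have hnodup : ((List.range' 1 63).map witnessConfig).Nodup := by
    rw [map_witnessConfig]
    decide +kernel
  rw [Finset.mem_Icc] at hx hy
  refine List.inj_on_of_nodup_map hnodup ?_ ?_ h <;> rw [List.mem_range'_1] <;> omega

theorem witnessConfig_terminal : LTerminal 63 witnessConfig := by
  intro v _
  refine le_trans (Finset.card_le_one.2 ?_) one_le_two
  intro x hx y hy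
  rw [chipsAt, Finset.mem_filter] at hx hy
  exact witnessConfig_injOn hx.1 hy.1 (hx.2.trans hy.2.symm)

/-- For `n = 6` (63 chips), there is a reachable terminal configuration of labeled
chip-firing in which the label of the chip at node 4 is smaller than the label of the chip
at its left child, node 8: the local binary-search-tree property can fail. -/
theorem stmt11 :
    ∃ (f : LConfig) (x y : ℕ),
      LReachable (2 ^ 6 - 1) f ∧ LTerminal (2 ^ 6 - 1) f ∧
      x ∈ Finset.Icc 1 (2 ^ 6 - 1) ∧ y ∈ Finset.Icc 1 (2 ^ 6 - 1) ∧
      f x = 4 ∧ f y = 8 ∧ x < y := by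
  refine ⟨witnessConfig, 25, 26, ⟨witnessMoves, ?_, rfl⟩, ?_, ?_, ?_, ?_, ?_, ?_⟩
  · exact legalSeq_of_legalCheck _ _ _ witnessMoves_legalCheck
  · exact witnessConfig_terminal
  · simp
  · simp
  · decide +kernel
  · decide +kernel
  · norm_num
end

section
/- For every n ≥ 2, the endgame poset P_n is graded by the rank function ρ((i, j)) = level(i) + 2j: (1, 0) is the unique minimal element and (1, n−2) is the unique maximal element of P_n, and whenever an element y covers an element x in P_n, ρ(y) = ρ(x) + 1. -/
/-- Membership in the endgame poset `P_n`: the pairs `(i, j)` with `i ≥ 1` and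
`level i + j < n`, where `(i, j)` represents the `j`-th-from-last firing of node `i`. -/
def memP (n : ℕ) (x : ℕ × ℕ) : Prop := 1 ≤ x.1 ∧ level x.1 + x.2 < n

/-- The generating (covering) relations of `P_n`: `(i, j) < (2i, j)`, `(i, j) < (2i+1, j)`,
and, for `i ≥ 2`, `(i, j) < (⌊i/2⌋, j+1)`, whenever both pairs involved lie in `P_n`. -/
def covStep (n : ℕ) (x y : ℕ × ℕ) : Prop :=
  memP n x ∧ memP n y ∧
    (y = (2 * x.1, x.2) ∨ y = (2 * x.1 + 1, x.2) ∨ (2 ≤ x.1 ∧ y = (x.1 / 2, x.2 + 1)))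

/-- The partial order of `P_n`: the reflexive-transitive closure of the generating
relations. -/
def Ple (n : ℕ) (x y : ℕ × ℕ) : Prop := Relation.ReflTransGen (covStep n) x y

/-- The strict order of `P_n`. -/
def Plt (n : ℕ) (x y : ℕ × ℕ) : Prop := Ple n x y ∧ x ≠ y

/-- The rank function `ρ((i, j)) = level i + 2j`. -/
def rho (x : ℕ × ℕ) : ℕ := level x.1 + 2 * x.2

/-- `z` is the join (least upper bound) of `x` and `y` in `P_n`. -/
def IsJoin (n : ℕ) (x y z : ℕ × ℕ) : Prop :=
  memP n z ∧ Ple n x z ∧ Ple n y z ∧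
    ∀ w, memP n w → Ple n x w → Ple n y w → Ple n z w

/-- `z` is the meet (greatest lower bound) of `x` and `y` in `P_n`. -/
def IsMeet (n : ℕ) (x y z : ℕ × ℕ) : Prop :=
  memP n z ∧ Ple n z x ∧ Ple n z y ∧
    ∀ w, memP n w → Ple n w x → Ple n w y → Ple n w z

theorem level_one : level 1 = 1 := by simp [level]

theorem level_half {i : ℕ} (hi : 2 ≤ i) : level i = level (i / 2) + 1 := by
  unfold level
  rw [Nat.log_of_one_lt_of_le (by norm_num) hi]

theorem level_double {i : ℕ} (hi : 1 ≤ i) : level (2 * i) = level i + 1 := by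
  rw [level_half (by omega), show 2 * i / 2 = i by omega]

theorem level_double_add_one {i : ℕ} (hi : 1 ≤ i) : level (2 * i + 1) = level i + 1 := by
  rw [level_half (by omega), show (2 * i + 1) / 2 = i by omega]

theorem rho_of_covStep {n : ℕ} {x y : ℕ × ℕ} (h : covStep n x y) : rho y = rho x + 1 := by
  obtain ⟨⟨hx, -⟩, -, rfl | rfl | ⟨h2, rfl⟩⟩ := h
  · have := level_double hx
    simp only [rho]; omega
  · have := level_double_add_one hx
    simp only [rho]; omega
  · have := level_half h2
    simp only [rho]; omega

theorem exists_covStep_to {n : ℕ} {x : ℕ × ℕ} (hx : memP n x) (hne : x ≠ (1, 0)) :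
    ∃ w, covStep n w x := by
  obtain ⟨i, j⟩ := x
  have hmem := hx
  obtain ⟨hi, hl⟩ := hx
  simp only at hi hl
  by_cases h2 : 2 ≤ i
  · have := level_half h2
    refine ⟨(i / 2, j), ⟨?_, ?_⟩, hmem, ?_⟩
    · simp only; omega
    · simp only; omega
    · simp only [Prod.mk.injEq, and_true]; omega
  · obtain rfl : i = 1 := by omega
    obtain _ | j := j
    · exact absurd rfl hne
    · have h1 := level_one
      have := level_half (le_refl 2)
      norm_num at this
      refine ⟨(2, j), ⟨by norm_num, ?_⟩, hmem, .inr (.inr ⟨le_rfl, by norm_num⟩)⟩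
      simp only; omega

theorem exists_covStep_from {n : ℕ} {x : ℕ × ℕ} (hx : memP n x) (hne : x ≠ (1, n - 2)) :
    ∃ w, covStep n x w := by
  obtain ⟨i, j⟩ := x
  have hmem := hx
  obtain ⟨hi, hl⟩ := hx
  simp only at hi hl
  by_cases h2 : 2 ≤ i
  · have := level_half h2
    refine ⟨(i / 2, j + 1), hmem, ⟨?_, ?_⟩, .inr (.inr ⟨h2, rfl⟩)⟩
    · simp only; omega
    · simp only; omega
  · obtain rfl : i = 1 := by omega
    have h1 := level_one
    have := level_half (le_refl 2)
    norm_num at this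
    have hj : j ≠ n - 2 := fun h => hne (by rw [h])
    refine ⟨(2, j), hmem, ⟨by norm_num, ?_⟩, .inl rfl⟩
    simp only; omega

theorem Ple_bot {n : ℕ} {x : ℕ × ℕ} (hx : memP n x) : Ple n (1, 0) x := by
  induction h : rho x generalizing x with
  | zero => simp [rho, level] at h
  | succ r ih =>
    by_cases hne : x = (1, 0)
    · subst hne; exact .refl
    · obtain ⟨w, hw⟩ := exists_covStep_to hx hne
      have := rho_of_covStep hw
      exact (ih hw.1 (by omega)).tail hw

theorem Ple_top {n : ℕ} {x : ℕ × ℕ} (hx : memP n x) : Ple n x (1, n - 2) := by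
  induction h : 2 * n - rho x generalizing x with
  | zero =>
    have := hx.2
    simp only [rho] at h; omega
  | succ r ih =>
    by_cases hne : x = (1, n - 2)
    · subst hne; exact .refl
    · obtain ⟨w, hw⟩ := exists_covStep_from hx hne
      have := rho_of_covStep hw
      exact (ih hw.2.1 (by omega)).head hw

/-- For every `n ≥ 2`, the endgame poset `P_n` is graded by `ρ((i, j)) = level i + 2j`:
`(1, 0)` is the unique minimal element, `(1, n − 2)` is the unique maximal element, and
whenever `y` covers `x` in `P_n`, `ρ(y) = ρ(x) + 1`. -/
theorem stmt14 (n : ℕ) (hn : 2 ≤ n) :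
    (∀ x, memP n x → Ple n (1, 0) x) ∧
    (∀ x, memP n x → Ple n x (1, n - 2)) ∧
    (∀ x y, memP n x → memP n y → Plt n x y →
      (∀ z, memP n z → ¬(Plt n x z ∧ Plt n z y)) → rho y = rho x + 1) := by
  refine ⟨fun x hx => Ple_bot hx, fun x hx => Ple_top hx, ?_⟩
  rintro x y - - ⟨hle, hne⟩ hcov
  obtain rfl | ⟨w, hxw, hwy⟩ := Relation.ReflTransGen.cases_head hle
  · exact absurd rfl hne
  · have hr := rho_of_covStep hxw
    by_cases hw : w = y
    · rw [← hw, hr]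
    · refine absurd ⟨⟨.single hxw, ?_⟩, hwy, hw⟩ (hcov w hxw.2.1)
      rintro rfl
      omega
end
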